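/- Let C be a strong divisibility sequence and let p be an ideal prime for C with parameter s = s(p). For any integer n ≥ 0, write n = α(p)·n' + r with n' ≥ 0 and 0 ≤ r < α(p). Then Σ_{m=0}^{n} x^{ν_p(binom(n,m)_C)} = (r+1)·Σ_{m'=0}^{n'} x^{ν_p(binom(n',m'))} + (α(p) − r − 1)·x^{s−1}·Σ_{m'=0}^{n'−1} x^{1 + ν_p(n'·binom(n'−1,m'))}, as an identity of polynomials in ℤ[x] (where binom denotes the ordinary binomial coefficient in the right-hand sums, and the last sum is empty when n' = 0). -/

import Mathlib

open Finset

/-- A strong divisibility sequence: nonzero integers `Cs 1, Cs 2, ...` with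
`gcd (Cs n) (Cs m) = |Cs (gcd n m)|`. -/
def IsStrongDivSeq (Cs : ℕ → ℤ) : Prop :=
  (∀ n, 1 ≤ n → Cs n ≠ 0) ∧
  ∀ m n, 1 ≤ m → 1 ≤ n → Int.gcd (Cs n) (Cs m) = (Cs (Nat.gcd n m)).natAbs

/-- `a` is the rank of apparition of `m` in the sequence `Cs`:
the least index `j ≥ 1` such that `m ∣ Cs j`. -/
def IsRank (Cs : ℕ → ℤ) (m a : ℕ) : Prop :=
  1 ≤ a ∧ (m : ℤ) ∣ Cs a ∧ ∀ j, 1 ≤ j → (m : ℤ) ∣ Cs j → a ≤ j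

/-- The `C`-orial: `0!_C = 1`, `n!_C = Cs 1 * Cs 2 * ⋯ * Cs n`. -/
def Corial (Cs : ℕ → ℤ) : ℕ → ℤ
  | 0 => 1
  | n + 1 => Corial Cs n * Cs (n + 1)

/-- `p` is an ideal prime for `Cs`, with `α k` the rank of apparition of `p ^ k`
and parameter `s = s(p)`. -/
def IdealPrime (Cs : ℕ → ℤ) (p : ℕ) (α : ℕ → ℕ) (s : ℕ) : Prop :=
  1 ≤ s ∧ (∀ k, 1 ≤ k → IsRank Cs (p ^ k) (α k)) ∧
  (∀ k, 1 ≤ k → k ≤ s → α k = α 1) ∧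
  (∀ k, s < k → α k = p ^ (k - s) * α 1)

/-- The `p`-adic valuation of the `C`-nomial coefficient `binom(n, m)_C`,
defined as `ν_p(n!_C) - ν_p(m!_C) - ν_p((n-m)!_C)` (an integer). -/
def nuCnomial (p : ℕ) (Cs : ℕ → ℤ) (n m : ℕ) : ℤ :=
  (padicValInt p (Corial Cs n) : ℤ) - (padicValInt p (Corial Cs m) : ℤ)
    - (padicValInt p (Corial Cs (n - m)) : ℤ)

lemma aux_dvd (Cs : ℕ → ℤ) (hC : IsStrongDivSeq Cs) (q a : ℕ) (h : IsRank Cs q a)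
    (j : ℕ) (hj : 1 ≤ j) : (q : ℤ) ∣ Cs j ↔ a ∣ j := by
  obtain ⟨ha, hd, hmin⟩ := h
  have hg := hC.2 a j ha hj
  have hgpos : 1 ≤ Nat.gcd j a := Nat.gcd_pos_of_pos_left _ hj
  constructor
  · intro h
    have h1 : (q : ℤ) ∣ Cs (Nat.gcd j a) := by
      rw [← Int.dvd_natAbs, ← hg]
      exact Int.dvd_coe_gcd h hd
    have h2 := hmin _ hgpos h1
    have h3 : Nat.gcd j a ∣ a := Nat.gcd_dvd_right _ _
    have h4 : Nat.gcd j a = a := le_antisymm (Nat.le_of_dvd ha h3) h2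
    rw [← h4]; exact Nat.gcd_dvd_left _ _
  · intro h
    rw [Nat.gcd_eq_right h] at hg
    have h1 : ((Cs a).natAbs : ℤ) ∣ Cs j := by
      rw [← hg]; exact Int.gcd_dvd_left _ _
    exact hd.trans ((Int.dvd_natAbs.2 dvd_rfl).trans h1)

lemma aux_val_zero (Cs : ℕ → ℤ) (p : ℕ) (hp : p.Prime) (α : ℕ → ℕ) (s : ℕ)
    (hC : IsStrongDivSeq Cs) (hid : IdealPrime Cs p α s) (j : ℕ) (hj : 1 ≤ j)
    (h : ¬ α 1 ∣ j) : padicValInt p (Cs j) = 0 := by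
  rw [← aux_dvd Cs hC _ _ (hid.2.1 1 le_rfl) j hj] at h
  apply padicValInt.eq_zero_of_not_dvd
  simpa using h

lemma aux_val (Cs : ℕ → ℤ) (p : ℕ) (hp : p.Prime) (α : ℕ → ℕ) (s : ℕ)
    (hC : IsStrongDivSeq Cs) (hid : IdealPrime Cs p α s) (i : ℕ) (hi : 1 ≤ i) :
    padicValInt p (Cs (α 1 * i)) = s + padicValNat p i := by
  haveI := Fact.mk hp
  obtain ⟨hs, hR, hA, hB⟩ := hid
  have ha : 1 ≤ α 1 := (hR 1 le_rfl).1
  have hj : 1 ≤ α 1 * i := Nat.mul_pos ha hi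
  have hne := hC.1 _ hj
  have key : ∀ v, p ^ v ∣ i ↔ s + v ≤ padicValInt p (Cs (α 1 * i)) := by
    intro v
    have h1 := aux_dvd Cs hC _ _ (hR (s + v) (by omega)) _ hj
    have h2 : α (s + v) = p ^ v * α 1 := by
      rcases Nat.eq_zero_or_pos v with rfl | hv
      · simpa using hA s hs le_rfl
      · rw [hB (s + v) (by omega)]; congr 2; omega
    rw [h2, mul_comm (p ^ v), Nat.mul_dvd_mul_iff_left ha] at h1
    rw [← h1]; push_cast
    rw [padicValInt_dvd_iff]; simp [hne]
  have key2 : ∀ v, p ^ v ∣ i ↔ v ≤ padicValNat p i := fun v =>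
    padicValNat_dvd_iff_le (by omega)
  have e1 := (key _).1 ((key2 _).2 le_rfl)
  have e2 := (key2 (padicValInt p (Cs (α 1 * i)) - s)).1 ((key _).2 (by omega))
  omega

lemma corial_ne (Cs : ℕ → ℤ) (hC : IsStrongDivSeq Cs) (n : ℕ) : Corial Cs n ≠ 0 := by
  induction n with
  | zero => simp [Corial]
  | succ n ih => exact mul_ne_zero ih (hC.1 _ (by omega))

lemma aux_fact (Cs : ℕ → ℤ) (p : ℕ) (hp : p.Prime) (α : ℕ → ℕ) (s : ℕ)
    (hC : IsStrongDivSeq Cs) (hid : IdealPrime Cs p α s) (n : ℕ) :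
    padicValInt p (Corial Cs n) = s * (n / α 1) + padicValNat p (n / α 1).factorial := by
  haveI := Fact.mk hp
  induction n with
  | zero => simp [Corial]
  | succ n ih =>
    rw [Corial, padicValInt.mul (corial_ne Cs hC n) (hC.1 _ (by omega)), ih, Nat.succ_div]
    split_ifs with h
    · obtain ⟨i, hi⟩ := h
      have ha : 1 ≤ α 1 := (hid.2.1 1 le_rfl).1
      have hi1 : 1 ≤ i := by
        rcases Nat.eq_zero_or_pos i with rfl | h
        · simp at hi
        · exact h
      have hq : n / α 1 + 1 = i := by
        have h2 := Nat.succ_div (a := n) (b := α 1)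
        rw [if_pos ⟨i, hi⟩, hi, Nat.mul_div_cancel_left _ ha] at h2
        exact h2.symm
      rw [hi, aux_val Cs p hp α s hC hid i hi1, Nat.factorial_succ,
        padicValNat.mul (by omega) (Nat.factorial_ne_zero _), hq, ← hq]
      ring
    · rw [aux_val_zero Cs p hp α s hC hid _ (by omega) h]; simp

lemma aux_div (a q t : ℕ) (ht : t < a) : (a * q + t) / a = q := by
  rw [Nat.mul_add_div (by omega), Nat.div_eq_of_lt ht, add_zero]

lemma choose_val (p : ℕ) (hp : p.Prime) (a b : ℕ) :
    padicValNat p (a + b).factorial =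
      padicValNat p ((a + b).choose a) + padicValNat p a.factorial
        + padicValNat p b.factorial := by
  haveI := Fact.mk hp
  have h := Nat.add_choose_mul_factorial_mul_factorial a b
  rw [← Nat.choose_symm_add] at h
  have h0 : (a + b).choose a ≠ 0 := (Nat.choose_pos (by omega)).ne'
  rw [← h, padicValNat.mul (mul_ne_zero h0 (Nat.factorial_ne_zero _)) (Nat.factorial_ne_zero _),
    padicValNat.mul h0 (Nat.factorial_ne_zero _)]

lemma aux_sum {R : Type*} [CommRing R] (f A B : ℕ → R) (a r N : ℕ) (hr : r < a)
    (hA : ∀ k t, k ≤ N → t ≤ r → f (a * k + t) = A k)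
    (hB : ∀ k t, k < N → r < t → t < a → f (a * k + t) = B k) :
    ∀ k, k ≤ N → ∑ m ∈ Finset.range (a * k + r + 1), f m =
      ((r : R) + 1) * ∑ m ∈ Finset.range (k + 1), A m +
      ((a : R) - r - 1) * ∑ m ∈ Finset.range k, B m := by
  have hAs : ∀ k, k ≤ N → ∑ t ∈ Finset.range (r + 1), f (a * k + t) = ((r : R) + 1) * A k := by
    intro k hk
    rw [Finset.sum_congr rfl (fun t ht => hA k t hk (by simp at ht; omega))]
    simp
  intro k
  induction k with
  | zero =>
    intro h
    have := hAs 0 h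
    simpa using this
  | succ k ih =>
    intro h
    obtain ⟨d, rfl⟩ : ∃ d, a = r + 1 + d := ⟨a - (r + 1), by omega⟩
    have e : (r + 1 + d) * (k + 1) + r + 1 = ((r + 1 + d) * k + r + 1 + d) + (r + 1) := by ring
    have e2 : (r + 1 + d) * k + r + 1 + d = (r + 1 + d) * (k + 1) := by ring
    have hBs : ∑ t ∈ Finset.range d, f ((r + 1 + d) * k + r + 1 + t) = (d : R) * B k := by
      have h1 : ∀ t ∈ Finset.range d, f ((r + 1 + d) * k + r + 1 + t) = B k := by
        intro t ht
        rw [show (r + 1 + d) * k + r + 1 + t = (r + 1 + d) * k + (r + 1 + t) by ring,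
          hB k (r + 1 + t) (by omega) (by omega) (by simp at ht; omega)]
      rw [Finset.sum_congr rfl h1]
      simp
    rw [e, Finset.sum_range_add, Finset.sum_range_add, ih (by omega), hBs, e2, hAs _ h,
      Finset.sum_range_succ A (k + 1), Finset.sum_range_succ B k]
    push_cast
    ring

theorem stmt10 (Cs : ℕ → ℤ) (p : ℕ) (hp : p.Prime) (α : ℕ → ℕ) (s : ℕ)
    (hC : IsStrongDivSeq Cs) (hid : IdealPrime Cs p α s)
    (n' r : ℕ) (hr : r < α 1) :
    ∑ m ∈ Finset.range (α 1 * n' + r + 1),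
        Polynomial.X ^ (nuCnomial p Cs (α 1 * n' + r) m).toNat =
      Polynomial.C ((r : ℤ) + 1) *
        (∑ m' ∈ Finset.range (n' + 1),
          Polynomial.X ^ padicValNat p (Nat.choose n' m')) +
      Polynomial.C ((α 1 : ℤ) - r - 1) * Polynomial.X ^ (s - 1) *
        (∑ m' ∈ Finset.range n',
          Polynomial.X ^ (1 + padicValNat p (n' * Nat.choose (n' - 1) m'))) := by
  haveI := Fact.mk hp
  have hs : 1 ≤ s := hid.1
  rw [aux_sum (R := Polynomial ℤ) _
    (fun m' => Polynomial.X ^ padicValNat p (Nat.choose n' m'))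
    (fun m' => Polynomial.X ^ (s - 1) *
      Polynomial.X ^ (1 + padicValNat p (n' * Nat.choose (n' - 1) m'))) (α 1) r n' hr
    ?_ ?_ n' le_rfl, ← Finset.mul_sum]
  · simp only [map_sub, map_add, map_one, map_natCast, mul_assoc]
  · intro k t hk ht
    obtain ⟨b, rfl⟩ := Nat.exists_eq_add_of_le hk
    obtain ⟨u, rfl⟩ := Nat.exists_eq_add_of_le ht
    have e : α 1 * (k + b) + (t + u) - (α 1 * k + t) = α 1 * b + u := by
      rw [mul_add]; omega
    have hv := choose_val p hp k b
    simp only [nuCnomial]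
    congr 1
    rw [e, aux_fact Cs p hp α s hC hid, aux_fact Cs p hp α s hC hid,
      aux_fact Cs p hp α s hC hid, aux_div _ _ _ hr, aux_div _ _ _ (by omega),
      aux_div _ _ _ (by omega), hv, mul_add]
    omega
  · intro k t hk ht hta
    obtain ⟨b, rfl⟩ := Nat.exists_eq_add_of_lt hk
    obtain ⟨u, hu⟩ := Nat.exists_eq_add_of_lt hta
    have e : α 1 * (k + b + 1) + r - (α 1 * k + t) = α 1 * b + (α 1 + r - t) := by
      rw [mul_add, mul_add]; omega
    have hv := choose_val p hp k b
    have h0 : (k + b).choose k ≠ 0 := (Nat.choose_pos (by omega)).ne'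
    simp only [nuCnomial]
    rw [← pow_add]
    congr 1
    rw [e, aux_fact Cs p hp α s hC hid, aux_fact Cs p hp α s hC hid,
      aux_fact Cs p hp α s hC hid, aux_div _ _ _ hr, aux_div _ _ _ hta,
      aux_div _ _ _ (by omega), Nat.factorial_succ,
      padicValNat.mul (by omega) (Nat.factorial_ne_zero _), hv, mul_add, mul_add,
      Nat.add_sub_cancel, padicValNat.mul (by omega) h0]
    omega
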